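/- Let I be a ROS-UET instance on a network G=(V,E,c,v*) and let H be a Hamiltonian cycle of G with total travel time c(H). Then there exists a feasible schedule for I with makespan at most c(H) + n + m − 1. -/

import Mathlib

/-- A network: a connected simple graph with positive integer travel times
and a distinguished depot vertex. -/
structure Network (V : Type*) where
  G : SimpleGraph V
  conn : G.Connected
  c : V → V → ℕ
  csymm : ∀ u v : V, c u v = c v u
  cpos : ∀ u v : V, G.Adj u v → 0 < c u v
  depot : V

/-- A route with `s` stays; stay `k` (for `k < s`) is `(a k, v k, b k)`. -/
structure Route (V : Type*) where
  s : ℕ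
  a : ℕ → ℕ
  v : ℕ → V
  b : ℕ → ℕ

/-- The length of a route: the end of its last stay. -/
def Route.length {V : Type*} (R : Route V) : ℕ := R.b (R.s - 1)

/-- `R` is a valid route in the network `N`. -/
def IsRoute {V : Type*} (N : Network V) (R : Route V) : Prop :=
  0 < R.s ∧ R.v 0 = N.depot ∧ R.v (R.s - 1) = N.depot ∧ R.a 0 = 0 ∧
    (∀ k < R.s, R.a k ≤ R.b k) ∧
    ∀ k, k + 1 < R.s →
      N.G.Adj (R.v k) (R.v (k + 1)) ∧
      R.a (k + 1) = R.b k + N.c (R.v k) (R.v (k + 1))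

/-- Routes `R` (one per machine) are compatible with the (unit execution time)
schedule `S`: each machine stays at the location of each job while processing it. -/
def Compatible {V : Type*} {n m : ℕ} (loc : Fin n → V)
    (S : Fin n → Fin m → ℕ) (R : Fin m → Route V) : Prop :=
  ∀ (i : Fin n) (q : Fin m), ∃ k < (R q).s,
    (R q).v k = loc i ∧ (R q).a k ≤ S i q ∧ S i q + 1 ≤ (R q).b k

/-- A schedule for a ROS-UET instance is feasible. -/
def Feasible {V : Type*} {n m : ℕ} (N : Network V) (loc : Fin n → V)
    (S : Fin n → Fin m → ℕ) : Prop :=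
  (∀ (i j : Fin n) (q : Fin m), i ≠ j → S i q ≠ S j q) ∧
  (∀ (i : Fin n) (q r : Fin m), q ≠ r → S i q ≠ S i r) ∧
  ∃ R : Fin m → Route V, (∀ q, IsRoute N (R q)) ∧ Compatible loc S R

/-- The makespan of a schedule: the least `L` such that there are compatible
routes, each of length at most `L`. -/
noncomputable def makespan {V : Type*} {n m : ℕ} (N : Network V) (loc : Fin n → V)
    (S : Fin n → Fin m → ℕ) : ℕ :=
  sInf {L | ∃ R : Fin m → Route V, (∀ q, IsRoute N (R q)) ∧
    Compatible loc S R ∧ ∀ q, Route.length (R q) ≤ L}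

/-- The total travel time of a walk in a graph with travel times `c`. -/
def walkWeight {V : Type*} {G : SimpleGraph V} (c : V → V → ℕ) {u w : V}
    (p : G.Walk u w) : ℕ :=
  (p.darts.map fun d => c d.toProd.1 d.toProd.2).sum

/-!
All machines follow the Hamiltonian cycle from the depot, machine `q` starting `q` time units after
machine `0`. At every vertex a machine processes the jobs located there, in an order common to all
machines, and then moves on. A machine thus performs the same trip as machine `0` with everything
shifted by `q`, so no two machines process the same job simultaneously, and machine `q` returns at
time `q + c(H) + n ≤ c(H) + n + m - 1`.
-/

section WalkWeight

variable {V : Type*} {G : SimpleGraph V} (c : V → V → ℕ) {u w : V}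

theorem walkWeight_take_zero (p : G.Walk u w) : walkWeight c (p.take 0) = 0 := by
  simp only [walkWeight, SimpleGraph.Walk.darts_take, List.take_zero, List.map_nil, List.sum_nil]

theorem walkWeight_take_succ (p : G.Walk u w) {k : ℕ} (hk : k < p.length) :
    walkWeight c (p.take (k + 1)) =
      walkWeight c (p.take k) + c (p.getVert k) (p.getVert (k + 1)) := by
  have hk' : k < (p.darts.map fun d => c d.toProd.1 d.toProd.2).length := by simpa using hk
  simp only [walkWeight, SimpleGraph.Walk.darts_take, List.map_take, List.sum_take_succ _ _ hk',
    List.getElem_map, SimpleGraph.Walk.darts_getElem_eq_getVert]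

theorem monotone_walkWeight_take (p : G.Walk u w) :
    Monotone fun k => walkWeight c (p.take k) := by
  simpa only [walkWeight, SimpleGraph.Walk.darts_take, List.map_take] using
    List.monotone_sum_take (p.darts.map fun d => c d.toProd.1 d.toProd.2)

theorem walkWeight_take_length (p : G.Walk u w) :
    walkWeight c (p.take p.length) = walkWeight c p := by
  rw [walkWeight, SimpleGraph.Walk.darts_take, ← p.length_darts, List.take_length, walkWeight]

theorem walkWeight_rotate [DecidableEq V] (p : G.Walk u u) (h : w ∈ p.support) :
    walkWeight c (p.rotate w h) = walkWeight c p :=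
  ((p.rotate_darts w h).perm.map _).sum_eq

end WalkWeight

section OfWalk

variable {V : Type*} {G : SimpleGraph V} (c : V → V → ℕ) {u w : V} (p : G.Walk u w)

/-- The route following a walk `p`, where `T k` is the total time spent staying at the first `k`
vertices of `p`. A vertex visited several times by `p` has one stay per visit. -/
def Route.ofWalk (T : ℕ → ℕ) : Route V where
  s := p.length + 1
  a k := walkWeight c (p.take k) + T k
  v := p.getVert
  b k := walkWeight c (p.take k) + T (k + 1)

theorem Route.length_ofWalk (T : ℕ → ℕ) :
    (Route.ofWalk c p T).length = walkWeight c p + T (p.length + 1) := by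
  simp only [Route.length, Route.ofWalk, Nat.add_sub_cancel, walkWeight_take_length]

end OfWalk

theorem isRoute_ofWalk {V : Type*} (N : Network V) (p : N.G.Walk N.depot N.depot) {T : ℕ → ℕ}
    (hT₀ : T 0 = 0) (hT : Monotone T) : IsRoute N (Route.ofWalk N.c p T) := by
  refine ⟨p.length.succ_pos, p.getVert_zero, p.getVert_length, ?_, fun k _ => ?_, fun k hk => ?_⟩
  · simp only [Route.ofWalk, walkWeight_take_zero, hT₀]
  · exact Nat.add_le_add_left (hT k.le_succ) _
  · have hk' : k < p.length := Nat.lt_of_succ_lt_succ hk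
    refine ⟨p.adj_getVert_succ hk', ?_⟩
    simp only [Route.ofWalk, walkWeight_take_succ N.c p hk']
    exact add_right_comm _ _ _

theorem makespan_le {V : Type*} {n m : ℕ} {N : Network V} {loc : Fin n → V}
    {S : Fin n → Fin m → ℕ} {R : Fin m → Route V} {L : ℕ} (hR : ∀ q, IsRoute N (R q))
    (hS : Compatible loc S R) (hL : ∀ q, (R q).length ≤ L) : makespan N loc S ≤ L :=
  Nat.sInf_le ⟨R, hR, hS, hL⟩

section Tour

variable {V : Type*} {G : SimpleGraph V} (c : V → V → ℕ) {u w : V} (p : G.Walk u w) {n m : ℕ}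

/-- The place of each job when all jobs are sorted by `pos`, ties being broken by index. -/
def jobRank {α : Type*} [LinearOrder α] (pos : Fin n → α) : Equiv.Perm (Fin n) :=
  (Tuple.sort pos).symm

theorem jobRank_lt_card_iff {α : Type*} [LinearOrder α] (pos : Fin n → α) (i : Fin n) (x : α) :
    (jobRank pos i : ℕ) < Finset.card {j | pos j < x} ↔ pos i < x := by
  have hcard : Finset.card {j | pos j < x} = Finset.card {j | (pos ∘ Tuple.sort pos) j < x} :=
    Finset.card_equiv (Tuple.sort pos).symm (by simp)
  rw [hcard, Tuple.lt_card_lt_iff_apply_lt_of_monotone (Tuple.monotone_sort pos)]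
  simp [jobRank]

/-- The time at which a machine following `p` and leaving the first vertex with delay `d` starts
job `i`, if job `i` is processed at the vertex with index `pos i` on `p` and jobs are processed in
the order of `jobRank pos`. -/
def startTime (pos : Fin n → ℕ) (d : ℕ) (i : Fin n) : ℕ :=
  walkWeight c (p.take (pos i)) + (d + jobRank pos i)

theorem startTime_injective (pos : Fin n → ℕ) (d : ℕ) :
    Function.Injective (startTime c p pos d) := by
  have hsorted : StrictMono (startTime c p pos d ∘ Tuple.sort pos) := by
    have htravel := (monotone_walkWeight_take c p).comp (Tuple.monotone_sort pos)
    have hrank : StrictMono fun j : Fin n => d + (j : ℕ) := fun _ _ h => Nat.add_lt_add_left h d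
    simpa [Function.comp_def, startTime, jobRank] using htravel.add_strictMono hrank
  exact (EquivLike.injective_comp (Tuple.sort pos) _).1 hsorted.injective

/-- The total time that a machine with initial delay `d` stays at the first `k` vertices of its
walk. The delay is spent at the first vertex, so it does not count for `k = 0`. -/
def totalStay (pos : Fin n → ℕ) (d k : ℕ) : ℕ :=
  if k = 0 then 0 else d + Finset.card {j | pos j < k}

theorem monotone_totalStay (pos : Fin n → ℕ) (d : ℕ) : Monotone (totalStay pos d) := by
  intro k l hkl
  have hcard : Finset.card {j | pos j < k} ≤ Finset.card {j | pos j < l} :=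
    Finset.card_le_card <| Finset.monotone_filter_right _ fun _ _ h => h.trans_le hkl
  unfold totalStay
  split_ifs <;> omega

theorem totalStay_le (pos : Fin n → ℕ) (d k : ℕ) : totalStay pos d k ≤ d + n := by
  have hcard : Finset.card {j | pos j < k} ≤ n := card_finset_fin_le _
  unfold totalStay
  split_ifs <;> omega

theorem totalStay_le_add_jobRank (pos : Fin n → ℕ) (d : ℕ) (i : Fin n) :
    totalStay pos d (pos i) ≤ d + jobRank pos i := by
  have hcard : Finset.card {j | pos j < pos i} ≤ jobRank pos i :=
    not_lt.1 <| (jobRank_lt_card_iff pos i (pos i)).not.2 (lt_irrefl _)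
  unfold totalStay
  split_ifs <;> omega

theorem add_jobRank_lt_totalStay (pos : Fin n → ℕ) (d : ℕ) (i : Fin n) :
    d + jobRank pos i < totalStay pos d (pos i + 1) := by
  rw [totalStay, if_neg (Nat.succ_ne_zero _)]
  exact Nat.add_lt_add_left ((jobRank_lt_card_iff pos i _).2 (Nat.lt_succ_self _)) d

theorem compatible_startTime {loc : Fin n → V} {pos : Fin n → ℕ}
    (hloc : ∀ i, p.getVert (pos i) = loc i) (hpos : ∀ i, pos i ≤ p.length) (d : Fin m → ℕ) :
    Compatible loc (fun i q => startTime c p pos (d q) i)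
      fun q => Route.ofWalk c p (totalStay pos (d q)) :=
  fun i q => ⟨pos i, Nat.lt_succ_of_le (hpos i), hloc i,
    Nat.add_le_add_left (totalStay_le_add_jobRank pos (d q) i) _,
    Nat.add_lt_add_left (add_jobRank_lt_totalStay pos (d q) i) _⟩

end Tour

theorem exists_feasible_makespan_le_of_depot_walk {V : Type*} {n m : ℕ} (N : Network V)
    (loc : Fin n → V) (p : N.G.Walk N.depot N.depot) (hp : ∀ i, loc i ∈ p.support) :
    ∃ S : Fin n → Fin m → ℕ, Feasible N loc S ∧
      makespan N loc S ≤ walkWeight N.c p + n + m - 1 := by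
  choose pos hloc hpos using fun i => SimpleGraph.Walk.mem_support_iff_exists_getVert.1 (hp i)
  have hroute (q : Fin m) : IsRoute N (Route.ofWalk N.c p (totalStay pos q)) :=
    isRoute_ofWalk N p (if_pos rfl) (monotone_totalStay pos q)
  have hcompat := compatible_startTime N.c p hloc hpos (Fin.val : Fin m → ℕ)
  refine ⟨fun i q => startTime N.c p pos q i, ⟨?_, ?_, _, hroute, hcompat⟩,
    makespan_le hroute hcompat fun q => ?_⟩
  · exact fun i j q hij => (startTime_injective N.c p pos q).ne hij
  · intro i q r hqr h
    simp only [startTime, Nat.add_left_cancel_iff, Nat.add_right_cancel_iff] at h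
    exact hqr (Fin.ext h)
  · rw [Route.length_ofWalk]
    have hstay := totalStay_le pos q (p.length + 1)
    omega

theorem statement2_general {V : Type*} {n m : ℕ} (N : Network V) (loc : Fin n → V) {u : V}
    (H : N.G.Walk u u) (hdepot : N.depot ∈ H.support) (hloc : ∀ i, loc i ∈ H.support) :
    ∃ S : Fin n → Fin m → ℕ, Feasible N loc S ∧
      makespan N loc S ≤ walkWeight N.c H + n + m - 1 := by
  classical
  rw [← walkWeight_rotate N.c H hdepot]
  exact exists_feasible_makespan_le_of_depot_walk N loc _ fun i =>
    (H.mem_support_rotate_iff _ hdepot).2 (hloc i)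

/-- For every ROS-UET instance and every Hamiltonian cycle `H`
of its network, there is a feasible schedule with makespan at most
`c(H) + n + m - 1`. -/
theorem statement2 {V : Type*} [Fintype V] [DecidableEq V] {n m : ℕ}
    (N : Network V) (loc : Fin n → V) (hm : 0 < m)
    (u : V) (H : N.G.Walk u u) (hH : H.IsHamiltonianCycle) :
    ∃ S : Fin n → Fin m → ℕ, Feasible N loc S ∧
      makespan N loc S ≤ walkWeight N.c H + n + m - 1 :=
  statement2_general N loc H (hH.mem_support _) fun i => hH.mem_support (loc i)
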